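/- arXiv:1701.07326 — 15 statements merged into one kernel-verified Lean document; each statement's English description precedes it below -/
import Mathlib

section
/- Let d ≥ 2 be an integer and let a1, a2, b1, b2, c1, c2 ≥ 1 be integers with a1 + a2 = b1 + b2 = c1 + c2 = d and 2a1 > d, 2b1 > d, 2c1 > d. Set α = a1 + b1 − d, β = a1 + c1 − d, ν = b1 + c1 − d and λ = a1·b1 + a2·c2 − b1·c2. Then α + β + ν ≤ 2λ. -/
/-- Lemma 2.6(2), Type I: for a regular trinomial h = x^{a1}y^{a2} + y^{b1}z^{b2} + z^{c1}x^{c2}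
of degree d, the invariants satisfy α + β + ν ≤ 2λ. -/
theorem stmt_1 (d a1 a2 b1 b2 c1 c2 : ℤ) (hd : 2 ≤ d)
    (ha1 : 1 ≤ a1) (ha2 : 1 ≤ a2) (hb1 : 1 ≤ b1) (hb2 : 1 ≤ b2) (hc1 : 1 ≤ c1) (hc2 : 1 ≤ c2)
    (hsa : a1 + a2 = d) (hsb : b1 + b2 = d) (hsc : c1 + c2 = d)
    (h2a : 2 * a1 > d) (h2b : 2 * b1 > d) (h2c : 2 * c1 > d) :
    (a1 + b1 - d) + (a1 + c1 - d) + (b1 + c1 - d) ≤ 2 * (a1 * b1 + a2 * c2 - b1 * c2) := by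
  have h1 : 0 ≤ (a1 + b1 - d - 1) * (d - 1 - 2 * c2) :=
    mul_nonneg (by omega) (by omega)
  have h2 : 0 ≤ (d - 1) * (a1 + b1 - d) := mul_nonneg (by omega) (by omega)
  have h3 : 0 ≤ (a2 - 1) * (b2 - 1) := mul_nonneg (by omega) (by omega)
  obtain rfl : a1 = d - a2 := by omega
  obtain rfl : b1 = d - b2 := by omega
  obtain rfl : c1 = d - c2 := by omega
  nlinarith
end

section
/- Let d ≥ 2 be an integer and let a1, a3, b ≥ 0 and a2, c ≥ 1 be integers with a1 + a2 + a3 = d, b + c = d, 2a2 > d and 2c > d. Set α = a2, β = c, ν = a2 + c − d and λ = a2·c − a3·b. Then α + β + ν ≤ 2λ. -/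
/-- Lemma 2.6(2), Type II: for a regular trinomial h = x^d + x^{a1}y^{a2}z^{a3} + y^b z^c
of degree d, the invariants α = a2, β = c, ν = a2 + c − d, λ = a2·c − a3·b satisfy
α + β + ν ≤ 2λ. -/
theorem stmt_2 (d a1 a2 a3 b c : ℤ) (hd : 2 ≤ d)
    (ha1 : 0 ≤ a1) (ha3 : 0 ≤ a3) (hb : 0 ≤ b) (ha2 : 1 ≤ a2) (hc : 1 ≤ c)
    (hsa : a1 + a2 + a3 = d) (hsb : b + c = d)
    (h2a : 2 * a2 > d) (h2c : 2 * c > d) :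
    a2 + c + (a2 + c - d) ≤ 2 * (a2 * c - a3 * b) := by
  have h1 : a3 * b ≤ (d - a2) * b := mul_le_mul_of_nonneg_right (by linarith) hb
  have h2 : 0 ≤ (a2 + c - d - 1) * (d - 1) := mul_nonneg (by omega) (by omega)
  obtain rfl : b = d - c := by omega
  nlinarith [h1, h2]
end

section
/- Let α, β, ν, λ be positive integers satisfying the strict triangle inequalities α < β + ν, β < α + ν, ν < α + β and the inequality α + β + ν ≤ 2λ (as hold for the invariants of any regular trinomial). Let n ≥ 1, l ≥ n and s ≥ 1 be integers. Then there is no triple (u1, u2, u3) ∈ ℤ³ with u1 + u2 + u3 odd such that |αn/(l^s·λ) − u1| + |βn/(l^s·λ) − u2| + |νn/(l^s·λ) − u3| < 1. -/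
/-- Lemma 2.6(3): for invariants (α, β, ν, λ) satisfying the strict triangle inequalities and
α + β + ν ≤ 2λ, the inequality Td(l^{−s}·t·n, u) < 1 has no solution u ∈ L_odd
for s ≥ 1 and l ≥ n. -/
theorem stmt_3 (α β ν lam n l : ℤ) (s : ℕ)
    (hα : 0 < α) (hβ : 0 < β) (hν : 0 < ν) (hlam : 0 < lam)
    (t1 : α < β + ν) (t2 : β < α + ν) (t3 : ν < α + β)
    (hsum : α + β + ν ≤ 2 * lam)
    (hn : 1 ≤ n) (hl : n ≤ l) (hs : 1 ≤ s) :
    ¬ ∃ u1 u2 u3 : ℤ, Odd (u1 + u2 + u3) ∧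
      |(α * n : ℝ) / ((l : ℝ) ^ s * (lam : ℝ)) - (u1 : ℝ)| +
      |(β * n : ℝ) / ((l : ℝ) ^ s * (lam : ℝ)) - (u2 : ℝ)| +
      |(ν * n : ℝ) / ((l : ℝ) ^ s * (lam : ℝ)) - (u3 : ℝ)| < 1 := by
  rintro ⟨u1, u2, u3, ho, h⟩
  have hn' : (1 : ℝ) ≤ n := by exact_mod_cast hn
  have hl' : (n : ℝ) ≤ l := by exact_mod_cast hl
  have hlam' : (0 : ℝ) < lam := by exact_mod_cast hlam
  have hls : (n : ℝ) ≤ (l : ℝ) ^ s :=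
    hl'.trans (le_self_pow₀ (hn'.trans hl') (by omega))
  have hpos : (0 : ℝ) < (l : ℝ) ^ s := by linarith
  obtain ⟨c, hc⟩ : ∃ c : ℝ, c = (n : ℝ) / ((l : ℝ) ^ s * (lam : ℝ)) := ⟨_, rfl⟩
  have hc0 : 0 < c := by
    rw [hc]
    have : (0 : ℝ) < n := by linarith
    positivity
  have hc1 : c * lam ≤ 1 := by
    have : c * lam = (n : ℝ) / (l : ℝ) ^ s := by
      rw [hc]; field_simp
    rw [this, div_le_one hpos]
    exact hls
  rw [mul_div_assoc, mul_div_assoc, mul_div_assoc, ← hc] at h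
  have a1 : (α : ℝ) + 1 ≤ β + ν := by exact_mod_cast t1
  have a2 : (β : ℝ) + 1 ≤ α + ν := by exact_mod_cast t2
  have a3 : (ν : ℝ) + 1 ≤ α + β := by exact_mod_cast t3
  have a4 : (α : ℝ) + β + ν ≤ 2 * lam := by exact_mod_cast hsum
  have b1 : (0 : ℝ) < α * c := mul_pos (by exact_mod_cast hα) hc0
  have b2 : (0 : ℝ) < β * c := mul_pos (by exact_mod_cast hβ) hc0
  have b3 : (0 : ℝ) < ν * c := mul_pos (by exact_mod_cast hν) hc0
  have e1 : (α : ℝ) * c < β * c + ν * c := by nlinarith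
  have e2 : (β : ℝ) * c < α * c + ν * c := by nlinarith
  have e3 : (ν : ℝ) * c < α * c + β * c := by nlinarith
  have e4 : (α : ℝ) * c + β * c + ν * c ≤ 2 := by nlinarith
  generalize (α : ℝ) * c = x at *
  generalize (β : ℝ) * c = y at *
  generalize (ν : ℝ) * c = z at *
  have key : ∀ (w : ℝ) (u : ℤ), 0 < w → w < 1 → |w - u| < 1 → u = 0 ∨ u = 1 := by
    intro w u h0 h1 h2
    rw [abs_lt] at h2
    have p : (-1 : ℝ) < u := by linarith
    have q : (u : ℝ) < 2 := by linarith
    have p' : -1 < u := by exact_mod_cast p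
    have q' : u < 2 := by exact_mod_cast q
    omega
  have n1 := abs_nonneg (x - u1)
  have n2 := abs_nonneg (y - u2)
  have n3 := abs_nonneg (z - u3)
  have p1 := le_abs_self (x - u1)
  have p2 := le_abs_self (y - u2)
  have p3 := le_abs_self (z - u3)
  have q1 := neg_abs_le (x - u1)
  have q2 := neg_abs_le (y - u2)
  have q3 := neg_abs_le (z - u3)
  rw [Int.odd_iff] at ho
  rcases key x u1 b1 (by linarith) (by linarith) with rfl | rfl <;>
  rcases key y u2 b2 (by linarith) (by linarith) with rfl | rfl <;>
  rcases key z u3 b3 (by linarith) (by linarith) with rfl | rfl <;>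
  first
  | (exfalso; omega)
  | (push_cast at *; linarith)
end

section
/- Let λ_h, α1, β1, ν1, l, n be positive integers, let s ≥ 0 be an integer, and let δ = (δ1, δ2, δ3) be one of (1,1,1), (1,0,0), (0,1,0), (0,0,1). Let (w1, w2, w3) be the unique integer triple with 0 ≤ w1, w2, w3 < 2λ_h, w1 ≡ l^s·α1·n − δ1·λ_h (mod 2λ_h), w2 ≡ l^s·β1·n − δ2·λ_h (mod 2λ_h), w3 ≡ l^s·ν1·n − δ3·λ_h (mod 2λ_h). Then the following are equivalent: (a) there exists (i, j, k) ∈ {0,1}³ with 2λ_h·(i + j + k) + (−1)^i·w1 + (−1)^j·w2 + (−1)^k·w3 < λ_h; (b) there exist integers v1, v2, v3 such that |l^s·α1·n/λ_h − (2v1 + δ1)| + |l^s·β1·n/λ_h − (2v2 + δ2)| + |l^s·ν1·n/λ_h − (2v3 + δ3)| < 1. -/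
theorem aux_abs (lam w d X : ℤ) (hl : 0 < lam) (hw : w ≡ X - d * lam [ZMOD 2 * lam]) :
    ∃ q : ℤ, ∀ v : ℤ, |(X : ℝ) / (lam : ℝ) - ((2 * v + d : ℤ) : ℝ)| =
      ((|w + 2 * lam * (q - v)| : ℤ) : ℝ) / (lam : ℝ) := by
  obtain ⟨q, hq⟩ := hw.dvd
  refine ⟨q, fun v => ?_⟩
  have hl' : (0 : ℝ) < lam := by exact_mod_cast hl
  have hX : X = w + d * lam + 2 * lam * q := by linarith
  rw [Int.cast_abs, ← abs_of_pos hl', ← abs_div, abs_of_pos hl', hX]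
  congr 1
  push_cast
  field_simp
  ring

theorem aux_le (lam w m : ℤ) (hl : 0 < lam) (h0 : 0 ≤ w) (h1 : w < 2 * lam) :
    ∃ i : ℕ, i ≤ 1 ∧ 2 * lam * (i : ℤ) + (-1 : ℤ) ^ i * w ≤ |w + 2 * lam * m| := by
  rcases le_or_gt 0 m with hm | hm
  · refine ⟨0, by norm_num, le_trans ?_ (le_abs_self _)⟩
    have := mul_nonneg hl.le hm
    simp
    nlinarith
  · refine ⟨1, le_rfl, le_trans ?_ (neg_le_abs _)⟩
    have : 0 ≤ lam * (-1 - m) := mul_nonneg hl.le (by omega)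
    simp
    nlinarith

theorem aux_eq (lam w : ℤ) (i : ℕ) (hi : i ≤ 1) (h0 : 0 ≤ w) (h1 : w < 2 * lam) :
    |w + 2 * lam * (-(i : ℤ))| = 2 * lam * (i : ℤ) + (-1 : ℤ) ^ i * w := by
  interval_cases i
  · simpa using h0
  · rw [abs_of_nonpos] <;> simp <;> linarith

/-- Lemma 3.4(1): f^δ_{l,n}(s) ∈ S_h (i.e. its representative (w1,w2,w3) lies in some T_{ijk})
if and only if Td(l^s·t·n, u) < 1 has a solution u ∈ L_odd^δ. -/
theorem stmt_5 (lamh a1 b1 nu1 n l : ℤ) (s : ℕ) (δ1 δ2 δ3 : ℤ)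
    (hlamh : 0 < lamh) (ha1 : 0 < a1) (hb1 : 0 < b1) (hnu1 : 0 < nu1) (hn : 0 < n) (hl : 0 < l)
    (hδ : (δ1, δ2, δ3) = (1, 1, 1) ∨ (δ1, δ2, δ3) = (1, 0, 0) ∨
          (δ1, δ2, δ3) = (0, 1, 0) ∨ (δ1, δ2, δ3) = (0, 0, 1))
    (w1 w2 w3 : ℤ)
    (hw1 : 0 ≤ w1) (hw1' : w1 < 2 * lamh) (hw1c : w1 ≡ l ^ s * a1 * n - δ1 * lamh [ZMOD 2 * lamh])
    (hw2 : 0 ≤ w2) (hw2' : w2 < 2 * lamh) (hw2c : w2 ≡ l ^ s * b1 * n - δ2 * lamh [ZMOD 2 * lamh])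
    (hw3 : 0 ≤ w3) (hw3' : w3 < 2 * lamh) (hw3c : w3 ≡ l ^ s * nu1 * n - δ3 * lamh [ZMOD 2 * lamh]) :
    (∃ i j k : ℕ, i ≤ 1 ∧ j ≤ 1 ∧ k ≤ 1 ∧
        2 * lamh * ((i : ℤ) + (j : ℤ) + (k : ℤ)) +
          (-1 : ℤ) ^ i * w1 + (-1 : ℤ) ^ j * w2 + (-1 : ℤ) ^ k * w3 < lamh) ↔
    (∃ v1 v2 v3 : ℤ,
        |(l ^ s * a1 * n : ℝ) / (lamh : ℝ) - ((2 * v1 + δ1 : ℤ) : ℝ)| +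
        |(l ^ s * b1 * n : ℝ) / (lamh : ℝ) - ((2 * v2 + δ2 : ℤ) : ℝ)| +
        |(l ^ s * nu1 * n : ℝ) / (lamh : ℝ) - ((2 * v3 + δ3 : ℤ) : ℝ)| < 1) := by
  obtain ⟨q1, h1⟩ := aux_abs lamh w1 δ1 _ hlamh hw1c
  obtain ⟨q2, h2⟩ := aux_abs lamh w2 δ2 _ hlamh hw2c
  obtain ⟨q3, h3⟩ := aux_abs lamh w3 δ3 _ hlamh hw3c
  have hl' : (0 : ℝ) < lamh := by exact_mod_cast hlamh
  have key : ∀ v1 v2 v3 : ℤ,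
      (|(l ^ s * a1 * n : ℝ) / (lamh : ℝ) - ((2 * v1 + δ1 : ℤ) : ℝ)| +
        |(l ^ s * b1 * n : ℝ) / (lamh : ℝ) - ((2 * v2 + δ2 : ℤ) : ℝ)| +
        |(l ^ s * nu1 * n : ℝ) / (lamh : ℝ) - ((2 * v3 + δ3 : ℤ) : ℝ)| < 1) ↔
      |w1 + 2 * lamh * (q1 - v1)| + |w2 + 2 * lamh * (q2 - v2)| +
        |w3 + 2 * lamh * (q3 - v3)| < lamh := by
    intro v1 v2 v3
    have e1 := h1 v1
    have e2 := h2 v2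
    have e3 := h3 v3
    rw [Int.cast_mul, Int.cast_mul, Int.cast_pow] at e1 e2 e3
    rw [e1, e2, e3, ← add_div, ← add_div, div_lt_one hl']
    exact_mod_cast Iff.rfl
  simp only [key]
  constructor
  · rintro ⟨i, j, k, hi, hj, hk, h⟩
    refine ⟨q1 + i, q2 + j, q3 + k, ?_⟩
    have r : ∀ q x : ℤ, q - (q + x) = -x := fun q x => by ring
    rw [r, r, r, aux_eq _ _ _ hi hw1 hw1', aux_eq _ _ _ hj hw2 hw2', aux_eq _ _ _ hk hw3 hw3']
    linarith
  · rintro ⟨v1, v2, v3, h⟩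
    obtain ⟨i, hi, ei⟩ := aux_le lamh w1 (q1 - v1) hlamh hw1 hw1'
    obtain ⟨j, hj, ej⟩ := aux_le lamh w2 (q2 - v2) hlamh hw2 hw2'
    obtain ⟨k, hk, ek⟩ := aux_le lamh w3 (q3 - v3) hlamh hw3 hw3'
    exact ⟨i, j, k, hi, hj, hk, by linarith⟩
end

section
/- Let λ_h, α1, β1, ν1, l, n be positive integers, let s ≥ 0 be an integer, and let δ = (δ1, δ2, δ3) be one of (1,1,1), (1,0,0), (0,1,0), (0,0,1). Let (w1, w2, w3) be the unique integer triple with 0 ≤ w1, w2, w3 < 2λ_h and w1 ≡ l^s·α1·n − δ1·λ_h, w2 ≡ l^s·β1·n − δ2·λ_h, w3 ≡ l^s·ν1·n − δ3·λ_h (mod 2λ_h). Suppose (i, j, k) ∈ {0,1}³ satisfies 2λ_h·(i + j + k) + (−1)^i·w1 + (−1)^j·w2 + (−1)^k·w3 < λ_h, and suppose integers v1, v2, v3 satisfy |l^s·α1·n/λ_h − (2v1 + δ1)| + |l^s·β1·n/λ_h − (2v2 + δ2)| + |l^s·ν1·n/λ_h − (2v3 + δ3)| < 1. Then this sum equals 2(i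 + j + k) + ((−1)^i·w1 + (−1)^j·w2 + (−1)^k·w3)/λ_h. -/
theorem coord_aux (L X δ w v : ℤ) (i : ℕ) (hL : 0 < L) (hw : 0 ≤ w) (hw' : w < 2 * L)
    (hc : w ≡ X - δ * L [ZMOD 2 * L]) (hi : i ≤ 1)
    (he : 2 * L * (i : ℤ) + (-1 : ℤ) ^ i * w < L)
    (hv : |(X : ℝ) / (L : ℝ) - ((2 * v + δ : ℤ) : ℝ)| < 1) :
    |(X : ℝ) / (L : ℝ) - ((2 * v + δ : ℤ) : ℝ)| =
      2 * (i : ℝ) + (-1 : ℝ) ^ i * (w : ℝ) / (L : ℝ) := by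
  obtain ⟨q, hq⟩ := hc.dvd
  have hLr : (0 : ℝ) < L := by exact_mod_cast hL
  have hX : X = w + δ * L + 2 * L * q := by linarith
  have key : (X : ℝ) / (L : ℝ) - ((2 * v + δ : ℤ) : ℝ)
      = ((w + 2 * L * (q - v) : ℤ) : ℝ) / (L : ℝ) := by
    rw [hX]; push_cast; field_simp; ring
  rw [key, abs_div, abs_of_pos hLr] at hv ⊢
  rw [div_lt_one hLr] at hv
  have hv2 : |w + 2 * L * (q - v)| < L := by exact_mod_cast hv
  obtain ⟨h1, h2⟩ := abs_lt.mp hv2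
  generalize q - v = m at *
  interval_cases i
  · have hm : m = 0 := by
      have a : m < 1 := by
        by_contra h
        nlinarith
      have b : -1 < m := by
        by_contra h
        simp at he
        nlinarith
      omega
    subst hm
    have : (0 : ℝ) ≤ w := by exact_mod_cast hw
    simp [abs_of_nonneg this]
  · have hm : m = -1 := by
      have a : m < 0 := by
        by_contra h
        simp at he
        nlinarith
      have b : -2 < m := by
        by_contra h
        nlinarith
      omega
    subst hm
    have : (w : ℝ) < 2 * L := by exact_mod_cast hw'
    push_cast
    rw [abs_of_nonpos (by linarith)]
    field_simp
    ring

theorem nonneg_aux (L w : ℤ) (i : ℕ) (hw : 0 ≤ w) (hw' : w < 2 * L) (hi : i ≤ 1) :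
    0 ≤ 2 * L * (i : ℤ) + (-1 : ℤ) ^ i * w := by
  interval_cases i <;> simp <;> omega


/-- Lemma 3.4(2): when f^δ_{l,n}(s) ∈ T_{ijk} with representative (w1,w2,w3), the taxicab
value Td(l^s·t·n, u) equals 2(i+j+k) + ((−1)^i w1 + (−1)^j w2 + (−1)^k w3)/λ_h. -/
theorem stmt_6 (lamh a1 b1 nu1 n l : ℤ) (s : ℕ) (δ1 δ2 δ3 : ℤ)
    (hlamh : 0 < lamh) (ha1 : 0 < a1) (hb1 : 0 < b1) (hnu1 : 0 < nu1) (hn : 0 < n) (hl : 0 < l)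
    (hδ : (δ1, δ2, δ3) = (1, 1, 1) ∨ (δ1, δ2, δ3) = (1, 0, 0) ∨
          (δ1, δ2, δ3) = (0, 1, 0) ∨ (δ1, δ2, δ3) = (0, 0, 1))
    (w1 w2 w3 : ℤ)
    (hw1 : 0 ≤ w1) (hw1' : w1 < 2 * lamh) (hw1c : w1 ≡ l ^ s * a1 * n - δ1 * lamh [ZMOD 2 * lamh])
    (hw2 : 0 ≤ w2) (hw2' : w2 < 2 * lamh) (hw2c : w2 ≡ l ^ s * b1 * n - δ2 * lamh [ZMOD 2 * lamh])
    (hw3 : 0 ≤ w3) (hw3' : w3 < 2 * lamh) (hw3c : w3 ≡ l ^ s * nu1 * n - δ3 * lamh [ZMOD 2 * lamh])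
    (i j k : ℕ) (hi : i ≤ 1) (hj : j ≤ 1) (hk : k ≤ 1)
    (hijk : 2 * lamh * ((i : ℤ) + (j : ℤ) + (k : ℤ)) +
        (-1 : ℤ) ^ i * w1 + (-1 : ℤ) ^ j * w2 + (-1 : ℤ) ^ k * w3 < lamh)
    (v1 v2 v3 : ℤ)
    (hv : |(l ^ s * a1 * n : ℝ) / (lamh : ℝ) - ((2 * v1 + δ1 : ℤ) : ℝ)| +
          |(l ^ s * b1 * n : ℝ) / (lamh : ℝ) - ((2 * v2 + δ2 : ℤ) : ℝ)| +
          |(l ^ s * nu1 * n : ℝ) / (lamh : ℝ) - ((2 * v3 + δ3 : ℤ) : ℝ)| < 1) :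
    |(l ^ s * a1 * n : ℝ) / (lamh : ℝ) - ((2 * v1 + δ1 : ℤ) : ℝ)| +
    |(l ^ s * b1 * n : ℝ) / (lamh : ℝ) - ((2 * v2 + δ2 : ℤ) : ℝ)| +
    |(l ^ s * nu1 * n : ℝ) / (lamh : ℝ) - ((2 * v3 + δ3 : ℤ) : ℝ)| =
      2 * ((i : ℝ) + (j : ℝ) + (k : ℝ)) +
        ((-1 : ℝ) ^ i * (w1 : ℝ) + (-1 : ℝ) ^ j * (w2 : ℝ) + (-1 : ℝ) ^ k * (w3 : ℝ)) / (lamh : ℝ) := by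
  have n1 := nonneg_aux lamh w1 i hw1 hw1' hi
  have n2 := nonneg_aux lamh w2 j hw2 hw2' hj
  have n3 := nonneg_aux lamh w3 k hw3 hw3' hk
  have c1 := coord_aux lamh _ δ1 w1 v1 i hlamh hw1 hw1' hw1c hi (by linarith)
  have c2 := coord_aux lamh _ δ2 w2 v2 j hlamh hw2 hw2' hw2c hj (by linarith)
  have c3 := coord_aux lamh _ δ3 w3 v3 k hlamh hw3 hw3' hw3c hk (by linarith)
  rw [show ((l ^ s * a1 * n : ℤ) : ℝ) = (l ^ s * a1 * n : ℝ) by push_cast; ring] at c1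
  rw [show ((l ^ s * b1 * n : ℤ) : ℝ) = (l ^ s * b1 * n : ℝ) by push_cast; ring] at c2
  rw [show ((l ^ s * nu1 * n : ℤ) : ℝ) = (l ^ s * nu1 * n : ℝ) by push_cast; ring] at c3
  have p1 := abs_nonneg ((l ^ s * a1 * n : ℝ) / (lamh : ℝ) - ((2 * v1 + δ1 : ℤ) : ℝ))
  have p2 := abs_nonneg ((l ^ s * b1 * n : ℝ) / (lamh : ℝ) - ((2 * v2 + δ2 : ℤ) : ℝ))
  have p3 := abs_nonneg ((l ^ s * nu1 * n : ℝ) / (lamh : ℝ) - ((2 * v3 + δ3 : ℤ) : ℝ))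
  rw [c1 (by linarith), c2 (by linarith), c3 (by linarith)]
  ring
end

section
/- Let λ_h, α1, β1, ν1, n be positive integers and set q = (α1·n/λ_h, β1·n/λ_h, ν1·n/λ_h) ∈ ℚ³. Let l, l' ≥ 1 be integers with l' ≡ l (mod 2λ_h) or l' ≡ −l (mod 2λ_h). Then for every integer s ≥ 0: there exists u ∈ L_odd with |l^s·q1 − u1| + |l^s·q2 − u2| + |l^s·q3 − u3| < 1 if and only if there exists u' ∈ L_odd with |l'^s·q1 − u'1| + |l'^s·q2 − u'2| + |l'^s·q3 − u'3| < 1, and in that case the two sums are equal. -/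
theorem aux_abs_s7 (x y : ℝ) (e k u : ℤ) (he : e = 1 ∨ e = -1) (h : y = e * x + 2 * k) :
    |y - ((e * u + 2 * k : ℤ) : ℝ)| = |x - u| := by
  subst h
  rcases he with rfl | rfl
  · congr 1; push_cast; ring
  · rw [abs_sub_comm x]; congr 1; push_cast; ring

theorem aux_uniq (x1 x2 x3 : ℝ) (u1 u2 u3 v1 v2 v3 : ℤ) (hu : Odd (u1 + u2 + u3))
    (hv : Odd (v1 + v2 + v3)) (h : |x1 - u1| + |x2 - u2| + |x3 - u3| < 1)
    (h' : |x1 - v1| + |x2 - v2| + |x3 - v3| < 1) : u1 = v1 ∧ u2 = v2 ∧ u3 = v3 := by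
  have t : ∀ (x : ℝ) (u v : ℤ), ((|u - v| : ℤ) : ℝ) ≤ |x - u| + |x - v| := by
    intro x u v
    push_cast
    rw [abs_sub_comm x u]
    exact abs_sub_le _ _ _
  have a1 := t x1 u1 v1
  have a2 := t x2 u2 v2
  have a3 := t x3 u3 v3
  have b : ((|u1 - v1| + |u2 - v2| + |u3 - v3| : ℤ) : ℝ) < ((2 : ℤ) : ℝ) := by
    push_cast at *
    linarith
  have c := Int.cast_lt.mp b
  obtain ⟨p, hp⟩ := hu
  obtain ⟨r, hr⟩ := hv
  clear b a1 a2 a3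
  rw [Int.abs_eq_natAbs, Int.abs_eq_natAbs, Int.abs_eq_natAbs] at c
  omega

theorem aux_main (x1 x2 x3 y1 y2 y3 : ℝ) (e k1 k2 k3 : ℤ) (he : e = 1 ∨ e = -1)
    (h1 : y1 = e * x1 + 2 * k1) (h2 : y2 = e * x2 + 2 * k2) (h3 : y3 = e * x3 + 2 * k3)
    (u1 u2 u3 : ℤ) (hu : Odd (u1 + u2 + u3)) (h : |x1 - u1| + |x2 - u2| + |x3 - u3| < 1) :
    ∃ v1 v2 v3 : ℤ, Odd (v1 + v2 + v3) ∧ |y1 - v1| + |y2 - v2| + |y3 - v3| < 1 ∧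
      |x1 - u1| + |x2 - u2| + |x3 - u3| = |y1 - v1| + |y2 - v2| + |y3 - v3| := by
  refine ⟨e * u1 + 2 * k1, e * u2 + 2 * k2, e * u3 + 2 * k3, ?_, ?_, ?_⟩
  · obtain ⟨p, hp⟩ := hu
    rw [Int.odd_iff]
    rcases he with rfl | rfl <;> omega
  · rw [aux_abs_s7 x1 y1 e k1 u1 he h1, aux_abs_s7 x2 y2 e k2 u2 he h2, aux_abs_s7 x3 y3 e k3 u3 he h3]
    exact h
  · rw [aux_abs_s7 x1 y1 e k1 u1 he h1, aux_abs_s7 x2 y2 e k2 u2 he h2, aux_abs_s7 x3 y3 e k3 u3 he h3]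

theorem aux_pow (m l l' : ℤ) (h : l' ≡ l [ZMOD m] ∨ l' ≡ -l [ZMOD m]) (s : ℕ) :
    ∃ e k : ℤ, (e = 1 ∨ e = -1) ∧ l' ^ s = e * l ^ s + m * k := by
  have key : ∃ e : ℤ, (e = 1 ∨ e = -1) ∧ l' ^ s ≡ e * l ^ s [ZMOD m] := by
    rcases h with h | h
    · exact ⟨1, Or.inl rfl, by simpa using h.pow s⟩
    · refine ⟨(-1) ^ s, neg_one_pow_eq_or ℤ s, ?_⟩
      rw [← mul_pow, neg_one_mul]
      exact h.pow s
  obtain ⟨e, he, hk⟩ := key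
  obtain ⟨k, hk⟩ := hk.symm.dvd
  exact ⟨e, k, he, by linarith⟩

/-- Theorem 3.5(1) (well-definedness): whether Td(l^s·t·n, u) < 1 has a solution u ∈ L_odd,
and its value, depend only on the class of l in (ℤ/2λ_hℤ)/{±1}. -/
theorem stmt_7 (lamh a1 b1 nu1 n l l' : ℤ)
    (hlamh : 0 < lamh) (ha1 : 0 < a1) (hb1 : 0 < b1) (hnu1 : 0 < nu1) (hn : 0 < n)
    (hl : 1 ≤ l) (hl' : 1 ≤ l')
    (hcong : l' ≡ l [ZMOD 2 * lamh] ∨ l' ≡ -l [ZMOD 2 * lamh]) (s : ℕ) :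
    ((∃ u1 u2 u3 : ℤ, Odd (u1 + u2 + u3) ∧
        |(l : ℝ) ^ s * ((a1 * n : ℝ) / (lamh : ℝ)) - (u1 : ℝ)| +
        |(l : ℝ) ^ s * ((b1 * n : ℝ) / (lamh : ℝ)) - (u2 : ℝ)| +
        |(l : ℝ) ^ s * ((nu1 * n : ℝ) / (lamh : ℝ)) - (u3 : ℝ)| < 1) ↔
      (∃ u1 u2 u3 : ℤ, Odd (u1 + u2 + u3) ∧
        |(l' : ℝ) ^ s * ((a1 * n : ℝ) / (lamh : ℝ)) - (u1 : ℝ)| +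
        |(l' : ℝ) ^ s * ((b1 * n : ℝ) / (lamh : ℝ)) - (u2 : ℝ)| +
        |(l' : ℝ) ^ s * ((nu1 * n : ℝ) / (lamh : ℝ)) - (u3 : ℝ)| < 1)) ∧
    (∀ u1 u2 u3 u1' u2' u3' : ℤ, Odd (u1 + u2 + u3) → Odd (u1' + u2' + u3') →
      |(l : ℝ) ^ s * ((a1 * n : ℝ) / (lamh : ℝ)) - (u1 : ℝ)| +
        |(l : ℝ) ^ s * ((b1 * n : ℝ) / (lamh : ℝ)) - (u2 : ℝ)| +
        |(l : ℝ) ^ s * ((nu1 * n : ℝ) / (lamh : ℝ)) - (u3 : ℝ)| < 1 →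
      |(l' : ℝ) ^ s * ((a1 * n : ℝ) / (lamh : ℝ)) - (u1' : ℝ)| +
        |(l' : ℝ) ^ s * ((b1 * n : ℝ) / (lamh : ℝ)) - (u2' : ℝ)| +
        |(l' : ℝ) ^ s * ((nu1 * n : ℝ) / (lamh : ℝ)) - (u3' : ℝ)| < 1 →
      |(l : ℝ) ^ s * ((a1 * n : ℝ) / (lamh : ℝ)) - (u1 : ℝ)| +
        |(l : ℝ) ^ s * ((b1 * n : ℝ) / (lamh : ℝ)) - (u2 : ℝ)| +
        |(l : ℝ) ^ s * ((nu1 * n : ℝ) / (lamh : ℝ)) - (u3 : ℝ)| =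
      |(l' : ℝ) ^ s * ((a1 * n : ℝ) / (lamh : ℝ)) - (u1' : ℝ)| +
        |(l' : ℝ) ^ s * ((b1 * n : ℝ) / (lamh : ℝ)) - (u2' : ℝ)| +
        |(l' : ℝ) ^ s * ((nu1 * n : ℝ) / (lamh : ℝ)) - (u3' : ℝ)|) := by
  obtain ⟨e, k, he, hk⟩ := aux_pow _ l l' hcong s
  have hL : (lamh : ℝ) ≠ 0 := by exact_mod_cast hlamh.ne'
  have hkR : (l' : ℝ) ^ s = e * (l : ℝ) ^ s + 2 * lamh * k := by exact_mod_cast hk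
  have hee : (e : ℝ) * e = 1 := by rcases he with rfl | rfl <;> norm_num
  have F : ∀ a : ℤ, (l' : ℝ) ^ s * ((a * n : ℝ) / (lamh : ℝ)) =
      e * ((l : ℝ) ^ s * ((a * n : ℝ) / (lamh : ℝ))) + 2 * ((k * a * n : ℤ) : ℝ) := by
    intro a
    rw [hkR]
    push_cast
    field_simp
  have G : ∀ a : ℤ, (l : ℝ) ^ s * ((a * n : ℝ) / (lamh : ℝ)) =
      e * ((l' : ℝ) ^ s * ((a * n : ℝ) / (lamh : ℝ))) + 2 * ((-e * (k * a * n) : ℤ) : ℝ) := by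
    intro a
    rw [F a]
    push_cast
    linear_combination (-((l : ℝ) ^ s * ((a * n : ℝ) / (lamh : ℝ)))) * hee
  refine ⟨⟨?_, ?_⟩, ?_⟩
  · rintro ⟨u1, u2, u3, hu, h⟩
    obtain ⟨v1, v2, v3, hv, hlt, -⟩ :=
      aux_main _ _ _ _ _ _ e _ _ _ he (F a1) (F b1) (F nu1) u1 u2 u3 hu h
    exact ⟨v1, v2, v3, hv, hlt⟩
  · rintro ⟨u1, u2, u3, hu, h⟩
    obtain ⟨v1, v2, v3, hv, hlt, -⟩ :=
      aux_main _ _ _ _ _ _ e _ _ _ he (G a1) (G b1) (G nu1) u1 u2 u3 hu h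
    exact ⟨v1, v2, v3, hv, hlt⟩
  · intro u1 u2 u3 w1 w2 w3 hu hw h h'
    obtain ⟨v1, v2, v3, hv, hlt, heq⟩ :=
      aux_main _ _ _ _ _ _ e _ _ _ he (F a1) (F b1) (F nu1) u1 u2 u3 hu h
    obtain ⟨rfl, rfl, rfl⟩ := aux_uniq _ _ _ _ _ _ _ _ _ hv hw hlt h'
    exact heq
end

section
/- Let λ_h, α1, β1, ν1, n, l be positive integers. Then for every integer s ≥ 0: there exists u ∈ L_odd with |l^s·α1·n/λ_h − u1| + |l^s·β1·n/λ_h − u2| + |l^s·ν1·n/λ_h − u3| < 1 if and only if there exists u' ∈ L_odd with |l^s·α1·(n + 2λ_h)/λ_h − u'1| + |l^s·β1·(n + 2λ_h)/λ_h − u'2| + |l^s·ν1·(n + 2λ_h)/λ_h − u'3| < 1, and in that case the two sums are equal. -/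
/-- Two odd lattice points at taxicab distance `< 1` from the same point coincide. -/
theorem odd_unique (x y z : ℝ) (u1 u2 u3 v1 v2 v3 : ℤ) (hu : Odd (u1 + u2 + u3))
    (hv : Odd (v1 + v2 + v3))
    (h : |x - u1| + |y - u2| + |z - u3| < 1) (h' : |x - v1| + |y - v2| + |z - v3| < 1) :
    u1 = v1 ∧ u2 = v2 ∧ u3 = v3 := by
  have key : |u1 - v1| + |u2 - v2| + |u3 - v3| < 2 := by
    have e1 := abs_sub_le (u1 : ℝ) x v1
    have e2 := abs_sub_le (u2 : ℝ) y v2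
    have e3 := abs_sub_le (u3 : ℝ) z v3
    rw [abs_sub_comm (u1 : ℝ) x] at e1
    rw [abs_sub_comm (u2 : ℝ) y] at e2
    rw [abs_sub_comm (u3 : ℝ) z] at e3
    have : |(u1 : ℝ) - v1| + |(u2 : ℝ) - v2| + |(u3 : ℝ) - v3| < 2 := by linarith
    exact_mod_cast this
  obtain ⟨a, ha⟩ := hu
  obtain ⟨b, hb⟩ := hv
  have := abs_nonneg (u1 - v1)
  have := abs_nonneg (u2 - v2)
  have := abs_nonneg (u3 - v3)
  rcases abs_cases (u1 - v1) with h1 | h1 <;> rcases abs_cases (u2 - v2) with h2 | h2 <;>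
    rcases abs_cases (u3 - v3) with h3 | h3 <;> omega

/-- Shifting `n` by `2 * lam` shifts the coordinate by the even integer `2 * l ^ s * a`. -/
theorem shift_coord (lam a n l : ℤ) (hlam : 0 < lam) (s : ℕ) (u : ℤ) :
    (l ^ s * a * (n + 2 * lam) : ℝ) / (lam : ℝ) - (u : ℝ) =
      (l ^ s * a * n : ℝ) / (lam : ℝ) - ((u - 2 * (l ^ s * a) : ℤ) : ℝ) := by
  have : (lam : ℝ) ≠ 0 := by exact_mod_cast hlam.ne'
  push_cast
  field_simp
  ring

/-- Theorem 3.5(2): Δ_{h,n} = Δ_{h,n+2λ_h}; the solvability of Td(l^s·t·n, u) < 1 and its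
value are unchanged when n is replaced by n + 2λ_h. -/
theorem stmt_8 (lamh a1 b1 nu1 n l : ℤ)
    (hlamh : 0 < lamh) (ha1 : 0 < a1) (hb1 : 0 < b1) (hnu1 : 0 < nu1) (hn : 0 < n) (hl : 0 < l)
    (s : ℕ) :
    ((∃ u1 u2 u3 : ℤ, Odd (u1 + u2 + u3) ∧
        |(l ^ s * a1 * n : ℝ) / (lamh : ℝ) - (u1 : ℝ)| +
        |(l ^ s * b1 * n : ℝ) / (lamh : ℝ) - (u2 : ℝ)| +
        |(l ^ s * nu1 * n : ℝ) / (lamh : ℝ) - (u3 : ℝ)| < 1) ↔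
      (∃ u1 u2 u3 : ℤ, Odd (u1 + u2 + u3) ∧
        |(l ^ s * a1 * (n + 2 * lamh) : ℝ) / (lamh : ℝ) - (u1 : ℝ)| +
        |(l ^ s * b1 * (n + 2 * lamh) : ℝ) / (lamh : ℝ) - (u2 : ℝ)| +
        |(l ^ s * nu1 * (n + 2 * lamh) : ℝ) / (lamh : ℝ) - (u3 : ℝ)| < 1)) ∧
    (∀ u1 u2 u3 u1' u2' u3' : ℤ, Odd (u1 + u2 + u3) → Odd (u1' + u2' + u3') →
      |(l ^ s * a1 * n : ℝ) / (lamh : ℝ) - (u1 : ℝ)| +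
        |(l ^ s * b1 * n : ℝ) / (lamh : ℝ) - (u2 : ℝ)| +
        |(l ^ s * nu1 * n : ℝ) / (lamh : ℝ) - (u3 : ℝ)| < 1 →
      |(l ^ s * a1 * (n + 2 * lamh) : ℝ) / (lamh : ℝ) - (u1' : ℝ)| +
        |(l ^ s * b1 * (n + 2 * lamh) : ℝ) / (lamh : ℝ) - (u2' : ℝ)| +
        |(l ^ s * nu1 * (n + 2 * lamh) : ℝ) / (lamh : ℝ) - (u3' : ℝ)| < 1 →
      |(l ^ s * a1 * n : ℝ) / (lamh : ℝ) - (u1 : ℝ)| +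
        |(l ^ s * b1 * n : ℝ) / (lamh : ℝ) - (u2 : ℝ)| +
        |(l ^ s * nu1 * n : ℝ) / (lamh : ℝ) - (u3 : ℝ)| =
      |(l ^ s * a1 * (n + 2 * lamh) : ℝ) / (lamh : ℝ) - (u1' : ℝ)| +
        |(l ^ s * b1 * (n + 2 * lamh) : ℝ) / (lamh : ℝ) - (u2' : ℝ)| +
        |(l ^ s * nu1 * (n + 2 * lamh) : ℝ) / (lamh : ℝ) - (u3' : ℝ)|) := by
  simp only [shift_coord lamh _ n l hlamh s]
  refine ⟨⟨?_, ?_⟩, ?_⟩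
  · rintro ⟨u1, u2, u3, ho, h⟩
    refine ⟨u1 + 2 * (l ^ s * a1), u2 + 2 * (l ^ s * b1), u3 + 2 * (l ^ s * nu1), ?_, ?_⟩
    · obtain ⟨k, hk⟩ := ho
      exact ⟨k + l ^ s * a1 + l ^ s * b1 + l ^ s * nu1, by linarith⟩
    · simpa only [add_sub_cancel_right] using h
  · rintro ⟨u1, u2, u3, ho, h⟩
    refine ⟨u1 - 2 * (l ^ s * a1), u2 - 2 * (l ^ s * b1), u3 - 2 * (l ^ s * nu1), ?_, h⟩
    obtain ⟨k, hk⟩ := ho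
    exact ⟨k - l ^ s * a1 - l ^ s * b1 - l ^ s * nu1, by linarith⟩
  · intro u1 u2 u3 v1 v2 v3 hu hv h h'
    have hv' : Odd ((v1 - 2 * (l ^ s * a1)) + (v2 - 2 * (l ^ s * b1)) +
        (v3 - 2 * (l ^ s * nu1))) := by
      obtain ⟨k, hk⟩ := hv
      exact ⟨k - l ^ s * a1 - l ^ s * b1 - l ^ s * nu1, by linarith⟩
    obtain ⟨e1, e2, e3⟩ := odd_unique _ _ _ _ _ _ _ _ _ hu hv' h h'
    rw [e1, e2, e3]
end

section
/- Let λ_h, α1, β1, ν1, n be positive integers and let l ≥ 1 be an integer with gcd(l, 2λ_h) = 1. Suppose there exists an integer s ≥ 0 and u ∈ L_odd with |l^s·α1·n/λ_h − u1| + |l^s·β1·n/λ_h − u2| + |l^s·ν1·n/λ_h − u3| < 1. Then the least such s is strictly smaller than the multiplicative order of l modulo 2λ_h. -/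
/-- Theorem 3.5(3): if Ds(l) < ∞ then Ds(l) is strictly smaller than the multiplicative
order of l in (ℤ/2λ_hℤ)*. -/
theorem stmt_9 (lamh a1 b1 nu1 n l : ℕ)
    (hlamh : 0 < lamh) (ha1 : 0 < a1) (hb1 : 0 < b1) (hnu1 : 0 < nu1) (hn : 0 < n)
    (hl : 1 ≤ l) (hcop : Nat.Coprime l (2 * lamh)) (s : ℕ)
    (hs : ∃ u1 u2 u3 : ℤ, Odd (u1 + u2 + u3) ∧
      |(l ^ s * a1 * n : ℝ) / (lamh : ℝ) - (u1 : ℝ)| +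
      |(l ^ s * b1 * n : ℝ) / (lamh : ℝ) - (u2 : ℝ)| +
      |(l ^ s * nu1 * n : ℝ) / (lamh : ℝ) - (u3 : ℝ)| < 1)
    (hmin : ∀ s' : ℕ, s' < s → ¬ ∃ u1 u2 u3 : ℤ, Odd (u1 + u2 + u3) ∧
      |(l ^ s' * a1 * n : ℝ) / (lamh : ℝ) - (u1 : ℝ)| +
      |(l ^ s' * b1 * n : ℝ) / (lamh : ℝ) - (u2 : ℝ)| +
      |(l ^ s' * nu1 * n : ℝ) / (lamh : ℝ) - (u3 : ℝ)| < 1) :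
    s < orderOf (l : ZMod (2 * lamh)) := by
  have : NeZero (2 * lamh) := ⟨by omega⟩
  have hpos : 0 < orderOf (l : ZMod (2 * lamh)) := by
    rw [← ZMod.coe_unitOfCoprime l hcop, orderOf_units]
    exact orderOf_pos _
  by_contra hlt
  push Not at hlt
  set d := orderOf (l : ZMod (2 * lamh)) with hd
  have hpow : (l : ZMod (2 * lamh)) ^ s = (l : ZMod (2 * lamh)) ^ (s - d) := by
    conv_lhs => rw [← Nat.sub_add_cancel hlt, pow_add, hd, pow_orderOf_eq_one, mul_one]
  have hdvd : ((2 * lamh : ℕ) : ℤ) ∣ (l : ℤ) ^ s - (l : ℤ) ^ (s - d) := by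
    rw [← ZMod.intCast_zmod_eq_zero_iff_dvd]
    push_cast
    rw [hpow, sub_self]
  obtain ⟨k, hk⟩ := hdvd
  have hkR : (l : ℝ) ^ s = (l : ℝ) ^ (s - d) + 2 * lamh * k := by
    have h : (((l : ℤ) ^ s - (l : ℤ) ^ (s - d) : ℤ) : ℝ) = (((2 * lamh : ℕ) : ℤ) * k : ℤ) := by
      rw [hk]
    push_cast at h
    linarith
  have hL : (lamh : ℝ) ≠ 0 := by positivity
  have key : ∀ (c : ℕ) (u : ℤ), (l ^ (s - d) * c * n : ℝ) / (lamh : ℝ)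
      - ((u - 2 * (k * c * n) : ℤ) : ℝ) = (l ^ s * c * n : ℝ) / (lamh : ℝ) - (u : ℝ) := by
    intro c u
    rw [hkR]
    push_cast
    field_simp
    ring
  obtain ⟨u1, u2, u3, hodd, hlt1⟩ := hs
  refine hmin (s - d) (by omega) ⟨u1 - 2 * (k * a1 * n), u2 - 2 * (k * b1 * n),
    u3 - 2 * (k * nu1 * n), ?_, ?_⟩
  · obtain ⟨m, hm⟩ := hodd
    exact ⟨m - k * a1 * n - k * b1 * n - k * nu1 * n, by linear_combination hm⟩
  · rw [key, key, key]
    exact hlt1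
end

section
/- Let α, β, ν, λ be positive integers satisfying the strict triangle inequalities α < β + ν, β < α + ν, ν < α + β and the inequality α + β + ν ≤ 2λ (as hold for the invariants of any regular trinomial). Then for every triple (u1, u2, u3) ∈ ℤ³ with u1 + u2 + u3 odd, one has |α/λ − u1| + |β/λ − u2| + |ν/λ − u3| ≥ 1. -/
/-- Theorem 4.1(1): for the invariants of a regular trinomial, Td(t, u) ≥ 1 for every
u ∈ L_odd, where t = (α/λ, β/λ, ν/λ). -/
theorem stmt_11 (α β ν lam : ℤ)
    (hα : 0 < α) (hβ : 0 < β) (hν : 0 < ν) (hlam : 0 < lam)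
    (t1 : α < β + ν) (t2 : β < α + ν) (t3 : ν < α + β)
    (hsum : α + β + ν ≤ 2 * lam) :
    ∀ u1 u2 u3 : ℤ, Odd (u1 + u2 + u3) →
      1 ≤ |(α : ℝ) / (lam : ℝ) - (u1 : ℝ)| + |(β : ℝ) / (lam : ℝ) - (u2 : ℝ)| +
          |(ν : ℝ) / (lam : ℝ) - (u3 : ℝ)| := by
  intro u1 u2 u3 hodd
  have hl : (0 : ℝ) < lam := by exact_mod_cast hlam
  have e : ∀ a u : ℤ, |(a : ℝ) / (lam : ℝ) - (u : ℝ)| = ((|a - lam * u| : ℤ) : ℝ) / lam := by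
    intro a u
    have h : (a : ℝ) / lam - u = (a - lam * u) / lam := by field_simp
    rw [h, abs_div, abs_of_pos hl]
    push_cast
    rfl
  rw [e, e, e, ← add_div, ← add_div, le_div_iff₀ hl, one_mul]
  norm_cast
  by_contra! hlt
  -- each coordinate of `u` must be `0` or `1`
  have key : ∀ a u : ℤ, 0 < a → a < lam → |a - lam * u| < lam → u = 0 ∨ u = 1 := by
    intro a u h0 h1 h
    rw [abs_lt] at h
    have hu1 : -1 < u := by
      by_contra! hc
      nlinarith
    have hu2 : u < 2 := by
      by_contra! hc
      nlinarith
    omega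
  have p1 := abs_nonneg (α - lam * u1)
  have p2 := abs_nonneg (β - lam * u2)
  have p3 := abs_nonneg (ν - lam * u3)
  have k1 := key α u1 hα (by omega) (by omega)
  have k2 := key β u2 hβ (by omega) (by omega)
  have k3 := key ν u3 hν (by omega) (by omega)
  have a1 := le_abs_self (α - lam * u1)
  have a2 := le_abs_self (β - lam * u2)
  have a3 := le_abs_self (ν - lam * u3)
  have b1 := neg_le_abs (α - lam * u1)
  have b2 := neg_le_abs (β - lam * u2)
  have b3 := neg_le_abs (ν - lam * u3)
  obtain ⟨k, hk⟩ := hodd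
  rcases k1 with rfl | rfl <;> rcases k2 with rfl | rfl <;> rcases k3 with rfl | rfl <;> omega
end

section
/- Let a1 > a2 ≥ 1 be integers with 2a1 > d where d = a1 + a2, set α = 2a1 − d and λ = a1² − a1·a2 + a2², let n ≥ 1 be an integer and q = αn/λ. Let m1 be an odd integer with |q − m1| minimal among odd integers. Then: (i) if |q − m1| < 1/3, there exists u ∈ L_odd with |q − u1| + |q − u2| + |q − u3| < 1, namely u = (m1, m1, m1), and the value of this sum is 3|q − m1|; (ii) if |q − m1| ≥ 1/3, there is no u ∈ L_odd with |q − u1| + |q − u2| + |q − u3| < 1. -/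
theorem odd_even_dist (q : ℝ) (u v : ℤ) (h : u ≠ v) :
    1 ≤ |q - (u : ℝ)| + |q - (v : ℝ)| := by
  have h1 : (1 : ℤ) ≤ |u - v| := Int.one_le_abs (sub_ne_zero.mpr h)
  have h2 : (1 : ℝ) ≤ |(u : ℝ) - v| := by exact_mod_cast h1
  have h3 := abs_sub_le (u : ℝ) q v
  rw [abs_sub_comm (u : ℝ) q] at h3
  linarith

/-- Corollary 4.4: for a symmetric trinomial with q = αn/λ and m1 a nearest odd integer
to q, Td(t·n, u) < 1 has the solution u = (m1, m1, m1) of value 3|q − m1| if |q − m1| < 1/3,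
and has no solution if |q − m1| ≥ 1/3. -/
theorem stmt_13 (a1 a2 d α lam : ℤ) (hd : d = a1 + a2)
    (ha2 : 1 ≤ a2) (ha : a2 < a1) (h2a1 : 2 * a1 > d)
    (hα : α = 2 * a1 - d) (hlam : lam = a1 ^ 2 - a1 * a2 + a2 ^ 2)
    (n : ℤ) (hn : 1 ≤ n) (q : ℝ) (hq : q = (α * n : ℝ) / (lam : ℝ))
    (m1 : ℤ) (hm1 : Odd m1)
    (hnear : ∀ m : ℤ, Odd m → |q - (m1 : ℝ)| ≤ |q - (m : ℝ)|) :
    (|q - (m1 : ℝ)| < 1 / 3 →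
      Odd (m1 + m1 + m1) ∧
      |q - (m1 : ℝ)| + |q - (m1 : ℝ)| + |q - (m1 : ℝ)| < 1 ∧
      |q - (m1 : ℝ)| + |q - (m1 : ℝ)| + |q - (m1 : ℝ)| = 3 * |q - (m1 : ℝ)|) ∧
    (1 / 3 ≤ |q - (m1 : ℝ)| →
      ¬ ∃ u1 u2 u3 : ℤ, Odd (u1 + u2 + u3) ∧
        |q - (u1 : ℝ)| + |q - (u2 : ℝ)| + |q - (u3 : ℝ)| < 1) := by
  constructor
  · intro h
    refine ⟨?_, by linarith, by ring⟩
    obtain ⟨k, hk⟩ := hm1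
    exact ⟨3 * k + 1, by omega⟩
  · rintro h ⟨u1, u2, u3, hu, hlt⟩
    have n1 := abs_nonneg (q - (u1 : ℝ))
    have n2 := abs_nonneg (q - (u2 : ℝ))
    have n3 := abs_nonneg (q - (u3 : ℝ))
    have e12 : u1 = u2 := by
      by_contra hne
      linarith [odd_even_dist q u1 u2 hne]
    have e13 : u1 = u3 := by
      by_contra hne
      linarith [odd_even_dist q u1 u3 hne]
    subst e12 e13
    have ho : Odd u1 := by
      obtain ⟨k, hk⟩ := hu
      exact ⟨k - u1, by omega⟩
    linarith [hnear u1 ho]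
end

section
/- Let h = x^{a1}y^{a2} + y^{a1}z^{a2} + z^{a1}x^{a2} be a symmetric trinomial of odd degree d = a1 + a2 ≥ 7 with a1 > d/2 and a2 ≥ 1. Set α = 2a1 − d, λ = a1² − a1·a2 + a2², a = gcd(α, λ) and λ_h = λ/a. Then λ_h > 6, and there exists an integer l' ≥ 1 with gcd(l', 2λ_h) = 1 such that: (a) there is no u ∈ L_odd with |α/λ − u1| + |α/λ − u2| + |α/λ − u3| < 1; and (b) there exists u ∈ L_odd with |l'·α/λ − u1| + |l'·α/λ − u2| + |l'·α/λ − u3| < 1, and the value of this sum is 6/λ_h. -/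
theorem aux_a (t : ℝ) (h0 : 0 ≤ t) (h1 : t ≤ 2 / 3) (u1 u2 u3 : ℤ) (ho : Odd (u1 + u2 + u3)) :
    1 ≤ |t - (u1 : ℝ)| + |t - (u2 : ℝ)| + |t - (u3 : ℝ)| := by
  have hodd : ∀ u : ℤ, Odd u → 1 - t ≤ |t - (u : ℝ)| := by
    intro u hu
    rcases le_or_gt 1 u with h | h
    · have h' : (1 : ℝ) ≤ u := by exact_mod_cast h
      have := neg_abs_le (t - (u : ℝ))
      linarith
    · have h2 : u ≤ -1 := by
        obtain ⟨k, rfl⟩ := hu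
        omega
      have h' : (u : ℝ) ≤ -1 := by exact_mod_cast h2
      have := le_abs_self (t - (u : ℝ))
      linarith
  have heven : ∀ u : ℤ, Even u → t ≤ |t - (u : ℝ)| := by
    intro u hu
    rcases le_or_gt u 0 with h | h
    · have h' : (u : ℝ) ≤ 0 := by exact_mod_cast h
      have := le_abs_self (t - (u : ℝ))
      linarith
    · have h2 : 2 ≤ u := by
        obtain ⟨k, rfl⟩ := hu
        omega
      have h' : (2 : ℝ) ≤ u := by exact_mod_cast h2
      have := neg_abs_le (t - (u : ℝ))
      linarith
  rcases Int.even_or_odd u1 with e1 | e1 <;> rcases Int.even_or_odd u2 with e2 | e2 <;>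
    rcases Int.even_or_odd u3 with e3 | e3 <;>
    first
    | (exfalso; obtain ⟨_, _⟩ := e1; obtain ⟨_, _⟩ := e2; obtain ⟨_, _⟩ := e3
       obtain ⟨_, _⟩ := ho; omega)
    | (have p1 := by first | exact hodd u1 e1 | exact heven u1 e1
       have p2 := by first | exact hodd u2 e2 | exact heven u2 e2
       have p3 := by first | exact hodd u3 e3 | exact heven u3 e3
       linarith)

/-- Theorem 4.5, odd degree case: for a symmetric trinomial of odd degree d ≥ 7,
λ_h > 6 and there is l' coprime to 2λ_h with Δ_{h,1}(l') = (6/λ_h, 1). -/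
theorem stmt_14 (a1 a2 d α lam a lamh : ℤ) (hd : d = a1 + a2)
    (ha2 : 1 ≤ a2) (h2a1 : 2 * a1 > d) (hd7 : 7 ≤ d) (hodd : Odd d)
    (hα : α = 2 * a1 - d) (hlam : lam = a1 ^ 2 - a1 * a2 + a2 ^ 2)
    (ha' : a = (Int.gcd α lam : ℤ)) (hlamh : lamh = lam / a) :
    6 < lamh ∧
    ∃ l' : ℤ, 1 ≤ l' ∧ Int.gcd l' (2 * lamh) = 1 ∧
      (¬ ∃ u1 u2 u3 : ℤ, Odd (u1 + u2 + u3) ∧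
        |(α : ℝ) / (lam : ℝ) - (u1 : ℝ)| + |(α : ℝ) / (lam : ℝ) - (u2 : ℝ)| +
          |(α : ℝ) / (lam : ℝ) - (u3 : ℝ)| < 1) ∧
      (∃ u1 u2 u3 : ℤ, Odd (u1 + u2 + u3) ∧
        |(l' * α : ℝ) / (lam : ℝ) - (u1 : ℝ)| + |(l' * α : ℝ) / (lam : ℝ) - (u2 : ℝ)| +
          |(l' * α : ℝ) / (lam : ℝ) - (u3 : ℝ)| < 1 ∧
        |(l' * α : ℝ) / (lam : ℝ) - (u1 : ℝ)| + |(l' * α : ℝ) / (lam : ℝ) - (u2 : ℝ)| +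
          |(l' * α : ℝ) / (lam : ℝ) - (u3 : ℝ)| = 6 / (lamh : ℝ)) := by
  have hα1 : α = a1 - a2 := by rw [hα, hd]; ring
  have ha1 : a1 = α + a2 := by omega
  have hαpos : 1 ≤ α := by omega
  have hlam' : lam = α ^ 2 + α * a2 + a2 ^ 2 := by rw [hlam, ha1]; ring
  have hαodd : Odd α := by
    obtain ⟨k, hk⟩ := hodd
    exact ⟨k - a2, by omega⟩
  have hlamodd : Odd lam := by
    have : lam = α ^ 2 + a2 * (a2 + α) := by rw [hlam']; ring
    rw [this]
    apply Odd.add_even hαodd.pow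
    rcases Int.even_or_odd a2 with h | h
    · exact h.mul_right _
    · exact (h.add_odd hαodd).mul_left _
  have hbig : 6 * α < lam := by
    have hc : α = 1 ∨ α = 3 ∨ α = 5 ∨ 6 ≤ α := by
      obtain ⟨k, hk⟩ := hαodd
      omega
    rw [hlam']
    rcases hc with h | h | h | h
    · subst h; have : 3 ≤ a2 := by omega
      nlinarith
    · subst h; have : 2 ≤ a2 := by omega
      nlinarith
    · subst h; nlinarith
    · nlinarith
  obtain ⟨α', hα'⟩ : a ∣ α := ha' ▸ Int.gcd_dvd_left ..
  obtain ⟨L, hL⟩ : a ∣ lam := ha' ▸ Int.gcd_dvd_right ..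
  have hapos : 0 < a := by
    rw [ha']; exact_mod_cast Int.gcd_pos_of_ne_zero_left _ (by omega)
  have hLL : lamh = L := by rw [hlamh, hL, Int.mul_ediv_cancel_left _ hapos.ne']
  subst hLL
  have hα'pos : 1 ≤ α' := by
    by_contra h
    nlinarith
  have h6 : 6 < lamh := by nlinarith
  have hLodd : Odd lamh := by
    rw [hL] at hlamodd
    exact (Int.odd_mul.mp hlamodd).2
  have hα'odd : Odd α' := by
    rw [hα'] at hαodd
    exact (Int.odd_mul.mp hαodd).2
  have hcop : IsCoprime α' lamh := by
    have hb := Int.gcd_eq_gcd_ab α lam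
    rw [← ha'] at hb
    refine ⟨Int.gcdA α lam, Int.gcdB α lam, ?_⟩
    apply mul_left_cancel₀ hapos.ne'
    linear_combination (-1 : ℤ) * hb - Int.gcdA α lam * hα' - Int.gcdB α lam * hL
  have h2 : IsCoprime α' 2 := by
    obtain ⟨k, hk⟩ := hα'odd
    exact ⟨1, -k, by rw [hk]; ring⟩
  obtain ⟨r, s, hrs⟩ := h2.mul_right hcop
  obtain ⟨l', n, hl1, hn, hln⟩ : ∃ l' n : ℤ, 1 ≤ l' ∧ Odd n ∧ l' * α' = lamh * n + 2 := by
    refine ⟨r * (lamh + 2) + 2 * lamh * (1 + |r * (lamh + 2)|),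
      1 - 2 * s * (lamh + 2) + 2 * (1 + |r * (lamh + 2)|) * α', ?_, ?_, ?_⟩
    · have := neg_abs_le (r * (lamh + 2))
      have := abs_nonneg (r * (lamh + 2))
      nlinarith
    · exact ⟨- s * (lamh + 2) + (1 + |r * (lamh + 2)|) * α', by ring⟩
    · linear_combination (lamh + 2) * hrs
  refine ⟨h6, l', hl1, ?_, ?_, n, n, n, ?_, ?_⟩
  · rw [← Int.isCoprime_iff_gcd_eq_one]
    have hl2 : IsCoprime l' 2 := by
      have : Odd (l' * α') := by
        rw [hln]; exact (hLodd.mul hn).add_even even_two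
      obtain ⟨k, hk⟩ := (Int.odd_mul.mp this).1
      exact ⟨1, -k, by rw [hk]; ring⟩
    refine hl2.mul_right ?_
    obtain ⟨m, hm⟩ := hLodd
    refine ⟨- m * α', 1 + m * n, ?_⟩
    linear_combination (-m) * hln + hm
  · rintro ⟨u1, u2, u3, ho, hlt⟩
    have hlamR : (0 : ℝ) < lam := by exact_mod_cast (by omega : 0 < lam)
    have hαR : (0 : ℝ) ≤ α := by exact_mod_cast (by omega : 0 ≤ α)
    have hbR : 6 * (α : ℝ) < lam := by exact_mod_cast hbig
    have := aux_a ((α : ℝ) / lam) (by positivity) (by rw [div_le_iff₀ hlamR]; linarith) u1 u2 u3 ho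
    linarith
  · exact (hn.add_odd hn).add_odd hn
  · have hLR : (6 : ℝ) < lamh := by exact_mod_cast h6
    have haR : (0 : ℝ) < a := by exact_mod_cast hapos
    have hlnR : (l' : ℝ) * α' = lamh * n + 2 := by exact_mod_cast hln
    have hL0 : (lamh : ℝ) ≠ 0 := by linarith
    have key : (l' * α : ℝ) / (lam : ℝ) - (n : ℝ) = 2 / lamh := by
      rw [hα', hL]
      push_cast
      field_simp
      linear_combination hlnR
    have hab : |(2 : ℝ) / lamh| = 2 / lamh := abs_of_nonneg (by positivity)
    rw [key, hab]
    have e : (2 : ℝ) / lamh + 2 / lamh + 2 / lamh = 6 / lamh := by ring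
    rw [e]
    exact ⟨by rw [div_lt_one (by linarith)]; exact hLR, rfl⟩
end

section
/- Let h = x^{a1}y^{a2} + y^{a1}z^{a2} + z^{a1}x^{a2} be a symmetric trinomial of even degree d = a1 + a2 ≥ 4 with a1 > d/2 and a2 ≥ 1. Set α = 2a1 − d, λ = a1² − a1·a2 + a2², a = gcd(α, λ) and λ_h = λ/a, and suppose λ_h is even. Then there exists an integer l' ≥ 1 with gcd(l', 2λ_h) = 1 such that: (a) there is no u ∈ L_odd with |α/λ − u1| + |α/λ − u2| + |α/λ − u3| < 1; and (b) there exists u ∈ L_odd with |l'·α/λ − u1| + |l'·α/λ − u2| + |l'·α/λ − u3| < 1, and the value of this sum is 3/λ_h. -/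
/-- Theorem 4.5, case d even and λ_h even: for a symmetric trinomial of even degree d ≥ 4
with λ_h even, there is l' coprime to 2λ_h with Δ_{h,1}(l') = (3/λ_h, 1). -/
theorem stmt_15 (a1 a2 d α lam a lamh : ℤ) (hd : d = a1 + a2)
    (ha2 : 1 ≤ a2) (h2a1 : 2 * a1 > d) (hd4 : 4 ≤ d) (heven : Even d)
    (hα : α = 2 * a1 - d) (hlam : lam = a1 ^ 2 - a1 * a2 + a2 ^ 2)
    (ha' : a = (Int.gcd α lam : ℤ)) (hlamh : lamh = lam / a) (hlamheven : Even lamh) :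
    ∃ l' : ℤ, 1 ≤ l' ∧ Int.gcd l' (2 * lamh) = 1 ∧
      (¬ ∃ u1 u2 u3 : ℤ, Odd (u1 + u2 + u3) ∧
        |(α : ℝ) / (lam : ℝ) - (u1 : ℝ)| + |(α : ℝ) / (lam : ℝ) - (u2 : ℝ)| +
          |(α : ℝ) / (lam : ℝ) - (u3 : ℝ)| < 1) ∧
      (∃ u1 u2 u3 : ℤ, Odd (u1 + u2 + u3) ∧
        |(l' * α : ℝ) / (lam : ℝ) - (u1 : ℝ)| + |(l' * α : ℝ) / (lam : ℝ) - (u2 : ℝ)| +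
          |(l' * α : ℝ) / (lam : ℝ) - (u3 : ℝ)| < 1 ∧
        |(l' * α : ℝ) / (lam : ℝ) - (u1 : ℝ)| + |(l' * α : ℝ) / (lam : ℝ) - (u2 : ℝ)| +
          |(l' * α : ℝ) / (lam : ℝ) - (u3 : ℝ)| = 3 / (lamh : ℝ)) := by
  have hα2 : 2 ≤ α := by
    obtain ⟨k, hk⟩ := heven
    omega
  have h3 : 3 * α ≤ lam := by
    have : a1 = a2 + α := by omega
    subst this
    rw [hlam]
    nlinarith
  have hlampos : 0 < lam := by omega
  have hapos : 0 < a := by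
    rw [ha']
    exact_mod_cast Int.gcd_pos_of_ne_zero_left _ (by omega)
  obtain ⟨A, hA⟩ : a ∣ α := ha' ▸ Int.gcd_dvd_left α lam
  obtain ⟨L, hL⟩ : a ∣ lam := ha' ▸ Int.gcd_dvd_right α lam
  have hLl : lamh = L := by
    rw [hlamh, hL]
    exact Int.mul_ediv_cancel_left _ hapos.ne'
  rw [hLl] at hlamheven ⊢
  clear hlamh hLl
  have hLA : 3 * A ≤ L := by
    rw [hA, hL] at h3
    nlinarith
  have hApos : 0 < A := by
    by_contra h
    nlinarith
  have hL4 : 4 ≤ L := by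
    obtain ⟨k, hk⟩ := hlamheven
    omega
  have hcop : IsCoprime A L := by
    have h1 : (a : ℤ) = α * Int.gcdA α lam + lam * Int.gcdB α lam := by
      rw [ha']
      exact Int.gcd_eq_gcd_ab α lam
    refine ⟨Int.gcdA α lam, Int.gcdB α lam, ?_⟩
    apply mul_left_cancel₀ hapos.ne'
    linear_combination -h1 - Int.gcdA α lam * hA - Int.gcdB α lam * hL
  have hcop2 : IsCoprime A (2 * L) := by
    refine IsCoprime.mul_right ?_ hcop
    obtain ⟨k, hk⟩ := hlamheven
    exact IsCoprime.of_isCoprime_of_dvd_right hcop ⟨k, by omega⟩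
  obtain ⟨l0, m0, h0⟩ := hcop2
  obtain ⟨k, hk⟩ := hlamheven
  obtain ⟨l, m, hl1, hlm⟩ : ∃ l m : ℤ, 1 ≤ l ∧ l * A = 1 + L * (2 * m + 1) := by
    refine ⟨l0 * (1 + L) + 2 * L * (|l0 * (1 + L)| + 1),
      -m0 * (1 + L) + A * (|l0 * (1 + L)| + 1), ?_, ?_⟩
    · have h1 := neg_abs_le (l0 * (1 + L))
      have h2 := abs_nonneg (l0 * (1 + L))
      nlinarith
    · linear_combination (1 + L) * h0
  have hlt : (α : ℝ) / lam = A / L := by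
    rw [hA, hL]
    push_cast
    have : (a : ℝ) ≠ 0 := by exact_mod_cast hapos.ne'
    rw [mul_div_mul_left _ _ this]
  have hLr : (0 : ℝ) < L := by exact_mod_cast (by omega : 0 < L)
  have hL4r : (4 : ℝ) ≤ L := by exact_mod_cast hL4
  refine ⟨l, hl1, ?_, ?_, 2 * m + 1, 2 * m + 1, 2 * m + 1, ⟨3 * m + 1, by ring⟩, ?_⟩
  · rw [← Int.isCoprime_iff_gcd_eq_one]
    refine IsCoprime.mul_right ?_ ⟨A, -(2 * m + 1), by linear_combination hlm⟩
    exact ⟨A, -(k * (2 * m + 1)), by linear_combination hlm + (2 * m + 1) * hk⟩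
  · rintro ⟨u1, u2, u3, hodd, hlt1⟩
    rw [hlt] at hlt1
    have ht0 : (0 : ℝ) < A / L := div_pos (by exact_mod_cast hApos) hLr
    have ht1 : (A : ℝ) / L ≤ 1 / 3 := by
      rw [div_le_div_iff₀ hLr (by norm_num)]
      have : (3 : ℝ) * A ≤ L := by exact_mod_cast hLA
      linarith
    generalize (A : ℝ) / L = t at *
    have key : ∀ u : ℤ, |t - u| < 1 → u = 0 ∨ u = 1 := by
      intro u hu
      rw [abs_lt] at hu
      have h1 : (u : ℝ) < 2 := by linarith
      have h2 : (-1 : ℝ) < u := by linarith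
      have h1' : u < 2 := by exact_mod_cast h1
      have h2' : -1 < u := by exact_mod_cast h2
      omega
    have p1 := abs_nonneg (t - u1)
    have p2 := abs_nonneg (t - u2)
    have p3 := abs_nonneg (t - u3)
    have e0 : |t| = t := abs_of_pos ht0
    have e1 : |t - 1| = 1 - t := by rw [abs_sub_comm, abs_of_nonneg]; linarith
    rcases key u1 (by linarith) with rfl | rfl <;> rcases key u2 (by linarith) with rfl | rfl <;>
      rcases key u3 (by linarith) with rfl | rfl <;>
      first
      | (exfalso; revert hodd; decide)
      | (simp only [Int.cast_zero, Int.cast_one, sub_zero, e0, e1] at hlt1; linarith)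
  · have e : (l * α : ℝ) / lam - ((2 * m + 1 : ℤ) : ℝ) = 1 / L := by
      rw [mul_div_assoc, hlt]
      have : (l : ℝ) * A = 1 + L * (2 * m + 1) := by exact_mod_cast hlm
      field_simp
      push_cast
      linarith
    rw [e, abs_of_pos (by positivity)]
    have e3 : (1 : ℝ) / L + 1 / L + 1 / L = 3 / L := by ring
    rw [e3]
    refine ⟨?_, rfl⟩
    rw [div_lt_one hLr]
    linarith
end

section
/- Let h = x^{a1}y^{a2} + y^{a1}z^{a2} + z^{a1}x^{a2} be a symmetric trinomial of degree d = a1 + a2 ≥ 4 with a1 > d/2 and a2 ≥ 1, and set α = 2a1 − d and λ = a1² − a1·a2 + a2². Let l ≥ 2 and s ≥ 0 be integers with 2λ < 3·l^s·α and 3·l^s·α < 4λ. Then the least integer s' ≥ 0 for which there exists u ∈ L_odd with |l^{s'}·α/λ − u1| + |l^{s'}·α/λ − u2| + |l^{s'}·α/λ − u3| < 1 is s' = s, and for s' = s the value of this sum equals 3·|l^s·α/λ − 1|. -/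
lemma td_ge_one (t : ℝ) (h0 : 0 < t) (h1 : t < 2 / 3) (u1 u2 u3 : ℤ)
    (ho : Odd (u1 + u2 + u3)) :
    1 ≤ |t - (u1 : ℝ)| + |t - (u2 : ℝ)| + |t - (u3 : ℝ)| := by
  by_contra! hc
  have key : ∀ u : ℤ, |t - (u : ℝ)| < 1 → u = 0 ∨ u = 1 := by
    intro u hu
    rw [abs_lt] at hu
    have a : (-1 : ℝ) < u := by linarith
    have b : (u : ℝ) < 2 := by linarith
    have a' : (-1 : ℤ) < u := by exact_mod_cast a
    have b' : u < (2 : ℤ) := by exact_mod_cast b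
    omega
  have p1 := abs_nonneg (t - (u1 : ℝ))
  have p2 := abs_nonneg (t - (u2 : ℝ))
  have p3 := abs_nonneg (t - (u3 : ℝ))
  have e0 : |t - ((0 : ℤ) : ℝ)| = t := by simp [abs_of_pos h0]
  have e1 : |t - ((1 : ℤ) : ℝ)| = 1 - t := by
    rw [abs_of_neg] <;> push_cast <;> linarith
  rcases key u1 (by linarith) with rfl | rfl <;> rcases key u2 (by linarith) with rfl | rfl <;>
    rcases key u3 (by linarith) with rfl | rfl <;> simp only [e0, e1] at hc <;>
    first
    | linarith
    | (exfalso; revert ho; decide)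

/-- Corollary 4.7, first part: for a symmetric trinomial, if 3l^s/4 < λ/α < 3l^s/2 then
Δ_{h,1}(l) = (3|l^s·α/λ − 1|, s). -/
theorem stmt_17 (a1 a2 d α lam : ℤ) (hd : d = a1 + a2)
    (ha2 : 1 ≤ a2) (h2a1 : 2 * a1 > d) (hd4 : 4 ≤ d)
    (hα : α = 2 * a1 - d) (hlam : lam = a1 ^ 2 - a1 * a2 + a2 ^ 2)
    (l : ℤ) (hl : 2 ≤ l) (s : ℕ)
    (hlow : 2 * lam < 3 * l ^ s * α) (hhigh : 3 * l ^ s * α < 4 * lam) :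
    (∀ s' : ℕ, s' < s → ¬ ∃ u1 u2 u3 : ℤ, Odd (u1 + u2 + u3) ∧
      |(l ^ s' * α : ℝ) / (lam : ℝ) - (u1 : ℝ)| + |(l ^ s' * α : ℝ) / (lam : ℝ) - (u2 : ℝ)| +
        |(l ^ s' * α : ℝ) / (lam : ℝ) - (u3 : ℝ)| < 1) ∧
    (∃ u1 u2 u3 : ℤ, Odd (u1 + u2 + u3) ∧
      |(l ^ s * α : ℝ) / (lam : ℝ) - (u1 : ℝ)| + |(l ^ s * α : ℝ) / (lam : ℝ) - (u2 : ℝ)| +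
        |(l ^ s * α : ℝ) / (lam : ℝ) - (u3 : ℝ)| < 1 ∧
      |(l ^ s * α : ℝ) / (lam : ℝ) - (u1 : ℝ)| + |(l ^ s * α : ℝ) / (lam : ℝ) - (u2 : ℝ)| +
        |(l ^ s * α : ℝ) / (lam : ℝ) - (u3 : ℝ)| = 3 * |(l ^ s * α : ℝ) / (lam : ℝ) - 1|) := by
  have hlam0 : 0 < lam := by nlinarith
  have hα0 : 0 < α := by omega
  have hL : (0 : ℝ) < lam := by exact_mod_cast hlam0
  have hA : (0 : ℝ) < α := by exact_mod_cast hα0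
  have hl2 : (2 : ℝ) ≤ l := by exact_mod_cast hl
  have hlow' : 2 * (lam : ℝ) < 3 * (l : ℝ) ^ s * α := by exact_mod_cast hlow
  have hhigh' : 3 * (l : ℝ) ^ s * α < 4 * (lam : ℝ) := by exact_mod_cast hhigh
  have ht1 : 2 / 3 < ((l : ℝ) ^ s * α) / (lam : ℝ) := by
    rw [lt_div_iff₀ hL]; linarith
  have ht2 : ((l : ℝ) ^ s * α) / (lam : ℝ) < 4 / 3 := by
    rw [div_lt_iff₀ hL]; linarith
  refine ⟨?_, 1, 1, 1, by decide, ?_, ?_⟩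
  · rintro s' hs ⟨u1, u2, u3, ho, hlt⟩
    refine absurd hlt (not_lt.mpr (td_ge_one _ ?_ ?_ u1 u2 u3 ho))
    · have : (0 : ℝ) < l := by linarith
      positivity
    · rw [div_lt_iff₀ hL]
      have h1 : (l : ℝ) ^ (s' + 1) ≤ (l : ℝ) ^ s :=
        pow_le_pow_right₀ (by linarith) hs
      have h2 : (0 : ℝ) < (l : ℝ) ^ s' := pow_pos (by linarith) _
      have h3 : 2 * (l : ℝ) ^ s' ≤ (l : ℝ) ^ s := by
        rw [pow_succ] at h1
        nlinarith
      have h4 := mul_le_mul_of_nonneg_right h3 hA.le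
      linarith
  · have : |((l : ℝ) ^ s * α) / (lam : ℝ) - ((1 : ℤ) : ℝ)| < 1 / 3 := by
      rw [abs_lt]; push_cast; constructor <;> linarith
    linarith
  · push_cast; ring
end

section
/- Let d ≥ 4 be an even integer, set α = d − 2 and λ = (d−1)(d−2) + 1 = d² − 3d + 3, and let m ≥ 2 be the integer with 3·2^{m−2} ≤ d − 1 < 3·2^{m−1}. Then, setting l = λ + 2: the least integer s ≥ 0 for which there exists u ∈ L_odd with |l^s·α/λ − u1| + |l^s·α/λ − u2| + |l^s·α/λ − u3| < 1 is s = m, and for s = m the value of this sum equals 3·|1 − 2^m·α/λ|. -/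
theorem aux_shift (α lam c : ℤ) (hl : 0 < lam) (hc : α = c + c) (s : ℕ) :
    ∃ k : ℤ, ((lam + 2 : ℤ) : ℝ) ^ s * ((α : ℝ) / (lam : ℝ)) =
      2 ^ s * ((α : ℝ) / (lam : ℝ)) + ((2 * k : ℤ) : ℝ) := by
  have h1 : lam ∣ (lam + 2) ^ s - 2 ^ s := by
    have := sub_dvd_pow_sub_pow (lam + 2) 2 s
    simpa using this
  obtain ⟨k, hk⟩ := h1
  refine ⟨k * c, ?_⟩
  have hk' : ((lam + 2 : ℤ) : ℝ) ^ s = 2 ^ s + (lam : ℝ) * k := by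
    have : (lam + 2) ^ s = 2 ^ s + lam * k := by linarith
    exact_mod_cast this
  have hl' : (lam : ℝ) ≠ 0 := by exact_mod_cast hl.ne'
  rw [hk', hc]
  push_cast
  field_simp
  ring

theorem aux_eq_s18 (x : ℝ) (a b : ℤ) (h : |x - a| + |x - b| < 1) : a = b := by
  have h1 : |(a : ℝ) - b| < 1 := by
    have := abs_sub_le (a : ℝ) x b
    rw [abs_sub_comm (a : ℝ) x] at this
    linarith
  have h2 : |a - b| < 1 := by exact_mod_cast h1
  have := Int.abs_lt_one_iff.mp h2
  omega

/-- Corollary 4.7(1) for the Klein d-curve, d even: with 3·2^{m−2} ≤ d−1 < 3·2^{m−1},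
Δ_{h,1}(λ + 2) = (3|1 − 2^m·α/λ|, m). -/
theorem stmt_18 (d α lam : ℤ) (hd4 : 4 ≤ d) (heven : Even d)
    (hα : α = d - 2) (hlam : lam = (d - 1) * (d - 2) + 1)
    (hlam' : lam = d ^ 2 - 3 * d + 3)
    (m : ℕ) (hm : 2 ≤ m)
    (hlow : (3 * 2 ^ (m - 2) : ℤ) ≤ d - 1) (hhigh : d - 1 < (3 * 2 ^ (m - 1) : ℤ)) :
    (∀ s : ℕ, s < m → ¬ ∃ u1 u2 u3 : ℤ, Odd (u1 + u2 + u3) ∧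
      |((lam + 2 : ℤ) : ℝ) ^ s * ((α : ℝ) / (lam : ℝ)) - (u1 : ℝ)| +
        |((lam + 2 : ℤ) : ℝ) ^ s * ((α : ℝ) / (lam : ℝ)) - (u2 : ℝ)| +
        |((lam + 2 : ℤ) : ℝ) ^ s * ((α : ℝ) / (lam : ℝ)) - (u3 : ℝ)| < 1) ∧
    (∃ u1 u2 u3 : ℤ, Odd (u1 + u2 + u3) ∧
      |((lam + 2 : ℤ) : ℝ) ^ m * ((α : ℝ) / (lam : ℝ)) - (u1 : ℝ)| +
        |((lam + 2 : ℤ) : ℝ) ^ m * ((α : ℝ) / (lam : ℝ)) - (u2 : ℝ)| +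
        |((lam + 2 : ℤ) : ℝ) ^ m * ((α : ℝ) / (lam : ℝ)) - (u3 : ℝ)| < 1 ∧
      |((lam + 2 : ℤ) : ℝ) ^ m * ((α : ℝ) / (lam : ℝ)) - (u1 : ℝ)| +
        |((lam + 2 : ℤ) : ℝ) ^ m * ((α : ℝ) / (lam : ℝ)) - (u2 : ℝ)| +
        |((lam + 2 : ℤ) : ℝ) ^ m * ((α : ℝ) / (lam : ℝ)) - (u3 : ℝ)| =
        3 * |1 - 2 ^ m * ((α : ℝ) / (lam : ℝ))|) := by
  have hl : 0 < lam := by rw [hlam]; nlinarith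
  obtain ⟨e, he⟩ := heven
  have hc : α = (e - 1) + (e - 1) := by omega
  have hlR : (0 : ℝ) < lam := by exact_mod_cast hl
  obtain ⟨n, rfl⟩ : ∃ n, m = n + 2 := ⟨m - 2, by omega⟩
  have e1 : n + 2 - 2 = n := by omega
  have e2 : n + 2 - 1 = n + 1 := by omega
  rw [e1] at hlow
  rw [e2, pow_succ] at hhigh
  have hup : 6 * 2 ^ n * α < 2 * lam := by
    rw [hα, hlam]; nlinarith
  have hge : d ≤ 6 * 2 ^ n := by omega
  have hlo : 2 * lam < 12 * 2 ^ n * α := by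
    rw [hα, hlam]; nlinarith
  have hupR : 6 * 2 ^ n * (α : ℝ) < 2 * lam := by exact_mod_cast hup
  have hloR : 2 * (lam : ℝ) < 12 * 2 ^ n * α := by exact_mod_cast hlo
  have hα0 : (0 : ℝ) < α := by
    have : 0 < α := by omega
    exact_mod_cast this
  set a : ℝ := (α : ℝ) / lam with ha
  have ha0 : 0 < a := by positivity
  have hal : (α : ℝ) = a * lam := by rw [ha]; field_simp
  have hA : 3 * (2 ^ (n + 1) * a) < 2 := by
    rw [hal] at hupR
    rw [pow_succ]
    by_contra hcon
    push Not at hcon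
    nlinarith
  have hB : 2 < 3 * (2 ^ (n + 2) * a) := by
    rw [hal] at hloR
    rw [pow_add]
    by_contra hcon
    push Not at hcon
    nlinarith
  constructor
  · rintro s hs ⟨u1, u2, u3, hodd, hlt⟩
    obtain ⟨k, hk⟩ := aux_shift α lam (e - 1) hl hc s
    rw [← ha] at hk
    rw [hk] at hlt
    have n1 := abs_nonneg (2 ^ s * a + ((2 * k : ℤ) : ℝ) - (u1 : ℝ))
    have n3 := abs_nonneg (2 ^ s * a + ((2 * k : ℤ) : ℝ) - (u3 : ℝ))
    have h12 := aux_eq_s18 _ u1 u2 (by linarith)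
    have h23 := aux_eq_s18 _ u2 u3 (by linarith)
    subst h12 h23
    have hpow : (2 : ℝ) ^ s ≤ 2 ^ (n + 1) := pow_le_pow_right₀ (by norm_num) (by omega)
    have hx : 3 * (2 ^ s * a) < 2 := by nlinarith
    have hx0 : 0 < 2 ^ s * a := by positivity
    have h3 : |2 ^ s * a + ((2 * k : ℤ) : ℝ) - (u1 : ℝ)| < 1 / 3 := by linarith
    rw [abs_lt] at h3
    obtain ⟨h3, h4⟩ := h3
    have b1 : ((u1 - 2 * k : ℤ) : ℝ) < ((1 : ℤ) : ℝ) := by push_cast at *; linarith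
    have b2 : ((-1 : ℤ) : ℝ) < ((u1 - 2 * k : ℤ) : ℝ) := by push_cast at *; linarith
    have b1' := Int.cast_lt.mp b1
    have b2' := Int.cast_lt.mp b2
    obtain ⟨t, ht⟩ := hodd
    omega
  · obtain ⟨k, hk⟩ := aux_shift α lam (e - 1) hl hc (n + 2)
    rw [← ha] at hk
    have hu : 3 * (2 ^ (n + 2) * a) < 4 := by
      rw [pow_succ]; linarith
    have key : |((lam + 2 : ℤ) : ℝ) ^ (n + 2) * a - ((2 * k + 1 : ℤ) : ℝ)|
        = |1 - 2 ^ (n + 2) * a| := by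
      rw [hk, abs_sub_comm]
      congr 1
      push_cast
      ring
    have hsm : |1 - 2 ^ (n + 2) * a| < 1 / 3 := by
      rw [abs_lt]; constructor <;> linarith
    refine ⟨2 * k + 1, 2 * k + 1, 2 * k + 1, ⟨3 * k + 1, by ring⟩, ?_, ?_⟩
    · rw [key]; linarith
    · rw [key]; ring
end

section
/- Let d ≥ 7 be an odd integer, set α = d − 2 and λ = (d−1)(d−2) + 1 = d² − 3d + 3, and set l = λ + 2. Then: (a) there is no u ∈ L_odd with |α/λ − u1| + |α/λ − u2| + |α/λ − u3| < 1; and (b) there exists u ∈ L_odd with |l·α/λ − u1| + |l·α/λ − u2| + |l·α/λ − u3| < 1, and the value of this sum is 6α/λ. -/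
/-- Corollary 4.7(2) for the Klein d-curve, d ≥ 7 odd: with l = λ + 2, Td(t, u) < 1 has no
solution, and Td(l·t, u) < 1 has a solution of value 6α/λ, i.e. Δ_{h,1}(λ + 2) = (6α/λ, 1). -/
theorem stmt_19 (d α lam : ℤ) (hd7 : 7 ≤ d) (hodd : Odd d)
    (hα : α = d - 2) (hlam : lam = (d - 1) * (d - 2) + 1)
    (hlam' : lam = d ^ 2 - 3 * d + 3) :
    (¬ ∃ u1 u2 u3 : ℤ, Odd (u1 + u2 + u3) ∧
      |(α : ℝ) / (lam : ℝ) - (u1 : ℝ)| + |(α : ℝ) / (lam : ℝ) - (u2 : ℝ)| +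
        |(α : ℝ) / (lam : ℝ) - (u3 : ℝ)| < 1) ∧
    (∃ u1 u2 u3 : ℤ, Odd (u1 + u2 + u3) ∧
      |((lam + 2) * α : ℝ) / (lam : ℝ) - (u1 : ℝ)| +
        |((lam + 2) * α : ℝ) / (lam : ℝ) - (u2 : ℝ)| +
        |((lam + 2) * α : ℝ) / (lam : ℝ) - (u3 : ℝ)| < 1 ∧
      |((lam + 2) * α : ℝ) / (lam : ℝ) - (u1 : ℝ)| +
        |((lam + 2) * α : ℝ) / (lam : ℝ) - (u2 : ℝ)| +
        |((lam + 2) * α : ℝ) / (lam : ℝ) - (u3 : ℝ)| = (6 * α : ℝ) / (lam : ℝ)) := by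
  have hα0 : 0 < α := by omega
  have h6 : 6 * α < lam := by subst hα; rw [hlam']; nlinarith
  have hl0 : 0 < lam := by omega
  have hαr : (0 : ℝ) < α := by exact_mod_cast hα0
  have hlr : (0 : ℝ) < lam := by exact_mod_cast hl0
  have h6r : (6 * α : ℝ) < lam := by exact_mod_cast h6
  have ht0 : (0 : ℝ) < α / lam := div_pos hαr hlr
  have ht6 : (6 * α : ℝ) / lam < 1 := by rw [div_lt_one hlr]; exact h6r
  have hte : (6 * α : ℝ) / lam = 6 * (α / lam) := by ring
  have hx : ((lam + 2) * α : ℝ) / (lam : ℝ) - (α : ℝ) = 2 * (α / lam) := by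
    field_simp
    ring
  constructor
  · rintro ⟨u1, u2, u3, ho, h⟩
    rw [hte] at ht6
    generalize (α : ℝ) / lam = t at *
    have key : ∀ u : ℤ, |t - (u : ℝ)| < 1 → u = 0 ∨ u = 1 := by
      intro u hu
      rw [abs_lt] at hu
      have h1 : (-1 : ℝ) < u := by linarith
      have h2 : (u : ℝ) < 2 := by linarith
      have h1' : -1 < u := by exact_mod_cast h1
      have h2' : u < 2 := by exact_mod_cast h2
      omega
    have n1 := abs_nonneg (t - (u1 : ℝ))
    have n2 := abs_nonneg (t - (u2 : ℝ))
    have n3 := abs_nonneg (t - (u3 : ℝ))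
    have e0 : |t - ((0 : ℤ) : ℝ)| = t := by
      rw [Int.cast_zero, sub_zero, abs_of_pos ht0]
    have e1 : |t - ((1 : ℤ) : ℝ)| = 1 - t := by
      rw [Int.cast_one, abs_of_neg (by linarith)]; ring
    rcases key u1 (by linarith) with rfl | rfl <;>
    rcases key u2 (by linarith) with rfl | rfl <;>
    rcases key u3 (by linarith) with rfl | rfl <;>
    simp only [e0, e1] at h <;>
    first
      | linarith
      | exact absurd ho (by decide)
  · refine ⟨α, α, α, ?_, ?_, ?_⟩
    · obtain ⟨k, hk⟩ := hodd
      exact ⟨3 * k - 2, by omega⟩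
    · rw [hx, abs_of_pos (by linarith)]; linarith
    · rw [hx, abs_of_pos (by linarith)]; linarith
end
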